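/- Let ψ = (φ₁,…,φₙ; σ) : ℤ^k → (ℤ^k)^n ⋊ Σ_n be an irreducible morphism with common stabilizer S and common restriction φ : S → ℤ^k, and let A ∈ ℝ^{k×k} be a matrix with A z = φ(z) for all z ∈ S. Then: (i) for all z₁, z₂ ∈ ℤ^k with σ_{z₁}^{-1}(1) = σ_{z₂}^{-1}(1), one has A z₁ − φ₁(z₁) = A z₂ − φ₁(z₂); hence, since σ acts transitively, the prescription a_{σ_z^{-1}(1)} := A z − φ₁(z) well-defines vectors a₁,…,aₙ ∈ ℝ^k; and (ii) these vectors satisfy A z + a_i = a_{σ_z^{-1}(i)} + φ_i(z) for all i ∈ {1,…,n} and all z ∈ ℤ^k. -/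

import Mathlib

/-!
Put `c i z := A z - φ i z`. Since `z ↦ A z` is additive, `c` satisfies the same twisted cocycle
identity as `φ`, namely `c i (y + z) = c i y + c (σ_y⁻¹ i) z`, and `c i` vanishes on the stabilizer
of `i`. If `z₁`, `z₂` both move `1` to `j` (under `σ⁻¹`), then `z₁ = z₂ + w` with `w` in the
stabilizer of `j`, so `c 1 z₁ = c 1 z₂ + c j w = c 1 z₂`; this is (i). For (ii), pick `y` with
`σ_y⁻¹ 1 = i`; the cocycle identity for `c 1 (y + z)` reads `a (σ_z⁻¹ i) = a i + c i z`.
-/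

/-- The inclusion of the standard lattice `ℤ^k` into `ℝ^k`. -/
def coeVec {k : ℕ} (z : Fin k → ℤ) : Fin k → ℝ := fun j => (z j : ℝ)

theorem coeVec_add {k : ℕ} (x y : Fin k → ℤ) : coeVec (x + y) = coeVec x + coeVec y := by
  ext j
  simp [coeVec]

theorem stmt19 {k n : ℕ} (hk : 1 ≤ k) (hn : 1 ≤ n)
    (σ : (Fin k → ℤ) → Equiv.Perm (Fin n))
    (hσ : ∀ z₁ z₂ : Fin k → ℤ, σ (z₁ + z₂) = σ z₁ * σ z₂)
    (φ : Fin n → (Fin k → ℤ) → Fin k → ℤ)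
    (hφ : ∀ (i : Fin n) (z₁ z₂ : Fin k → ℤ),
      φ i (z₁ + z₂) = φ i z₁ + φ ((σ z₁)⁻¹ i) z₂)
    (hirr : ∀ i j : Fin n, ∃ z : Fin k → ℤ, σ z i = j)
    (A : Matrix (Fin k) (Fin k) ℝ)
    (hA : ∀ (i : Fin n) (z : Fin k → ℤ), σ z i = i →
      A.mulVec (coeVec z) = coeVec (φ i z)) :
    (∀ z₁ z₂ : Fin k → ℤ, (σ z₁)⁻¹ ⟨0, hn⟩ = (σ z₂)⁻¹ ⟨0, hn⟩ →
      A.mulVec (coeVec z₁) - coeVec (φ ⟨0, hn⟩ z₁) =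
        A.mulVec (coeVec z₂) - coeVec (φ ⟨0, hn⟩ z₂)) ∧
    (∃ a : Fin n → Fin k → ℝ,
      (∀ z : Fin k → ℤ, a ((σ z)⁻¹ ⟨0, hn⟩) = A.mulVec (coeVec z) - coeVec (φ ⟨0, hn⟩ z)) ∧
      (∀ (i : Fin n) (z : Fin k → ℤ),
        A.mulVec (coeVec z) + a i = a ((σ z)⁻¹ i) + coeVec (φ i z))) := by
  have hinv : ∀ (y z : Fin k → ℤ) (i : Fin n), (σ (y + z))⁻¹ i = (σ z)⁻¹ ((σ y)⁻¹ i) := by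
    intro y z i
    rw [hσ, mul_inv_rev, Equiv.Perm.mul_apply]
  have hcoc : ∀ (i : Fin n) (y z : Fin k → ℤ),
      A.mulVec (coeVec (y + z)) - coeVec (φ i (y + z)) =
        (A.mulVec (coeVec y) - coeVec (φ i y)) +
          (A.mulVec (coeVec z) - coeVec (φ ((σ y)⁻¹ i) z)) := by
    intro i y z
    rw [hφ, coeVec_add, coeVec_add, Matrix.mulVec_add]
    abel
  have key : ∀ z₁ z₂ : Fin k → ℤ, (σ z₁)⁻¹ ⟨0, hn⟩ = (σ z₂)⁻¹ ⟨0, hn⟩ →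
      A.mulVec (coeVec z₁) - coeVec (φ ⟨0, hn⟩ z₁) =
        A.mulVec (coeVec z₂) - coeVec (φ ⟨0, hn⟩ z₂) := by
    intro z₁ z₂ h
    obtain ⟨w, rfl⟩ : ∃ w, z₁ = z₂ + w := ⟨z₁ - z₂, by abel⟩
    rw [hinv, Equiv.Perm.inv_eq_iff_eq] at h
    rw [hcoc, hA _ w h.symm, sub_self, add_zero]
  refine ⟨key, ?_⟩
  have htrans : ∀ i : Fin n, ∃ y : Fin k → ℤ, (σ y)⁻¹ ⟨0, hn⟩ = i := by
    intro i
    obtain ⟨y, hy⟩ := hirr i ⟨0, hn⟩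
    exact ⟨y, Equiv.Perm.inv_eq_iff_eq.mpr hy.symm⟩
  choose y hy using htrans
  have ha : ∀ z : Fin k → ℤ,
      A.mulVec (coeVec (y ((σ z)⁻¹ ⟨0, hn⟩))) - coeVec (φ ⟨0, hn⟩ (y ((σ z)⁻¹ ⟨0, hn⟩))) =
        A.mulVec (coeVec z) - coeVec (φ ⟨0, hn⟩ z) := fun z => key _ _ (hy _)
  refine ⟨fun i => A.mulVec (coeVec (y i)) - coeVec (φ ⟨0, hn⟩ (y i)), ha, ?_⟩
  intro i z
  have h := ha (y i + z)
  rw [hcoc, hinv, hy i] at h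
  beta_reduce
  rw [h]
  abel
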